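/- Fix an r-tuple T = (t_1,…,t_r) of positive integers. Then the family of real numbers 1/[K_{N,T} : K], indexed by all r-tuples N = (n_1,…,n_r) of positive integers, is summable; that is, the series ∑_N 1/[K_{N,T} : K] converges. -/

import Mathlib

open scoped BigOperators

/-- A fixed primitive `n`-th root of unity in `ℂ` (for `n ≥ 1`). -/
noncomputable def primRoot (n : ℕ) : ℂ := Complex.exp (2 * Real.pi * Complex.I / n)

/-- The subfield `K(ζ_n, α_1^{1/t_1}, …, α_r^{1/t_r})` of `ℂ`, obtained by adjoining to `K`
a primitive `n`-th root of unity and, for each `i`, all complex roots of `X^{t_i} - α_i`. -/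
noncomputable def kummerField (K : IntermediateField ℚ ℂ) {r : ℕ} (α : Fin r → ℂ)
    (n : ℕ) (t : Fin r → ℕ) : IntermediateField ℚ ℂ :=
  K ⊔ IntermediateField.adjoin ℚ ({primRoot n} ∪ ⋃ i, {z : ℂ | z ^ (t i) = α i})

/-- The cyclotomic extension `K(ζ_n)` of `K` inside `ℂ`. -/
noncomputable def cycloField (K : IntermediateField ℚ ℂ) (n : ℕ) : IntermediateField ℚ ℂ :=
  K ⊔ IntermediateField.adjoin ℚ {primRoot n}

lemma cyclo_le_kummer (K : IntermediateField ℚ ℂ) {r : ℕ} (α : Fin r → ℂ)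
    (n : ℕ) (t : Fin r → ℕ) : cycloField K n ≤ kummerField K α n t :=
  sup_le_sup_left (IntermediateField.adjoin.mono _ _ _ Set.subset_union_left) _

lemma base_le_kummer (K : IntermediateField ℚ ℂ) {r : ℕ} (α : Fin r → ℂ)
    (n : ℕ) (t : Fin r → ℕ) : K ≤ kummerField K α n t :=
  le_sup_left

/-!
The degree satisfies `φ(n) ∏ mᵢ ≤ C [K(ζₙ, αᵢ^{1/mᵢ}) : K]` with `C` independent of the `mᵢ`, where
`n = lcm(mᵢ)`. As `φ(n) ≥ √n / 2` and `∏ mᵢ ≤ n ^ r`, the factor `φ(n)` is at least a small positive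
power of `∏ mᵢ`, which makes the series converge.

For the degree bound, `[K(ζₙ) : K] ≥ φ(n) / [K : ℚ]`, so it remains to find about `∏ mᵢ` elements
independent over `K(ζₙ)`. If `β = ∏ αᵢ^{eᵢ/mᵢ}` lies in `K(ζₙ)`, then `K(β)/K` is abelian, and
Schinzel's argument gives `β ^ w ∈ Kˣ μₙ`, where `w` is the number of roots of unity in `K`. By the
Northcott property, the elements of `Kˣ` having a power in the group generated by the `αᵢ` do so
with bounded exponents, which forces `mᵢ ∣ P eᵢ` for a constant `P`. Hence the monomials with
`0 ≤ eᵢ < mᵢ / P` are pairwise inequivalent modulo `K(ζₙ)ˣ`, and Dedekind's independence of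
characters shows that they are linearly independent over `K(ζₙ)`.
-/

section Totient

lemma le_totient_sq_of_odd {n : ℕ} (hn : Odd n) : n ≤ n.totient ^ 2 := by
  induction n using Nat.recOnPosPrimePosCoprime with
  | zero => simp
  | one => simp
  | prime_pow p k hp hk =>
    have hp_odd : Odd p := hn.of_dvd_nat (dvd_pow_self p hk.ne')
    have hp3 : 3 ≤ p := hp.two_le.lt_of_ne' fun h => absurd (h ▸ hp_odd) (by decide)
    obtain ⟨j, rfl⟩ := Nat.exists_eq_add_one.2 hk
    have hp_le : p ≤ (p - 1) ^ 2 := by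
      obtain ⟨q, rfl⟩ := Nat.exists_eq_add_of_le hp3
      rw [show 3 + q - 1 = q + 2 by omega]
      nlinarith
    calc p ^ (j + 1) = p ^ j * p := pow_succ p j
      _ ≤ (p ^ j) ^ 2 * (p - 1) ^ 2 :=
        Nat.mul_le_mul (Nat.le_self_pow two_ne_zero _) hp_le
      _ = (p ^ (j + 1)).totient ^ 2 := by rw [Nat.totient_prime_pow_succ hp, mul_pow]
  | coprime a b _ _ hab iha ihb =>
    obtain ⟨ha, hb⟩ := Nat.odd_mul.1 hn
    rw [Nat.totient_mul hab, mul_pow]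
    exact Nat.mul_le_mul (iha ha) (ihb hb)

lemma two_pow_le_two_mul_totient_sq (k : ℕ) : 2 ^ k ≤ 2 * (2 ^ k).totient ^ 2 := by
  cases k with
  | zero => simp
  | succ j =>
    rw [Nat.totient_prime_pow_succ Nat.prime_two, pow_succ']
    simpa using Nat.le_self_pow two_ne_zero (2 ^ j)

lemma le_two_mul_totient_sq (n : ℕ) : n ≤ 2 * n.totient ^ 2 := by
  rcases eq_or_ne n 0 with rfl | hn
  · simp
  obtain ⟨k, m, hm, rfl⟩ := Nat.exists_eq_two_pow_mul_odd hn
  rw [Nat.totient_mul (hm.coprime_two_left.pow_left k), mul_pow, ← mul_assoc]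
  exact Nat.mul_le_mul (two_pow_le_two_mul_totient_sq k) (le_totient_sq_of_odd hm)

lemma sqrt_le_two_mul_totient (n : ℕ) : √(n : ℝ) ≤ 2 * n.totient := by
  refine Real.sqrt_le_iff.2 ⟨by positivity, ?_⟩
  have hn : (n : ℝ) ≤ 2 * (n.totient : ℝ) ^ 2 := mod_cast le_two_mul_totient_sq n
  nlinarith [sq_nonneg (n.totient : ℝ)]

end Totient

section Summability

variable {ι : Type*} [Fintype ι]

lemma summable_pi_prod {κ : ι → Type*} {f : ∀ i, κ i → ℝ} (hf0 : ∀ i k, 0 ≤ f i k)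
    (hf : ∀ i, Summable (f i)) : Summable fun N : ∀ i, κ i => ∏ i, f i (N i) := by
  classical
  refine summable_of_sum_le (c := ∏ i, ∑' k, f i k)
    (fun N => Finset.prod_nonneg fun i _ => hf0 i _) fun s => ?_
  have hs : s ⊆ Fintype.piFinset fun i => s.image (· i) := fun N hN =>
    Fintype.mem_piFinset.2 fun i => Finset.mem_image_of_mem _ hN
  calc ∑ N ∈ s, ∏ i, f i (N i)
      ≤ ∑ N ∈ Fintype.piFinset fun i => s.image (· i), ∏ i, f i (N i) :=
        Finset.sum_le_sum_of_subset_of_nonneg hs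
          fun N _ _ => Finset.prod_nonneg fun i _ => hf0 i _
    _ = ∏ i, ∑ k ∈ s.image (· i), f i k := (Finset.prod_univ_sum _ _).symm
    _ ≤ ∏ i, ∑' k, f i k :=
        Finset.prod_le_prod (fun i _ => Finset.sum_nonneg fun _ _ => hf0 i _)
          fun i _ => (hf i).sum_le_tsum _ fun _ _ => hf0 i _

lemma prod_rpow_le_two_mul_totient {m : ι → ℕ} {n : ℕ} (hn : n ≠ 0) (hm : ∀ i, m i ≤ n) :
    (∏ i, (m i : ℝ)) ^ (1 / (2 * (Fintype.card ι + 1)) : ℝ) ≤ 2 * n.totient := by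
  have hn1 : (1 : ℝ) ≤ n := mod_cast Nat.one_le_iff_ne_zero.2 hn
  have hprod : ∏ i, (m i : ℝ) ≤ (n : ℝ) ^ Fintype.card ι :=
    mod_cast Finset.prod_le_pow_card _ _ _ fun i _ => hm i
  calc (∏ i, (m i : ℝ)) ^ (1 / (2 * (Fintype.card ι + 1)) : ℝ)
      ≤ ((n : ℝ) ^ Fintype.card ι) ^ (1 / (2 * (Fintype.card ι + 1)) : ℝ) := by gcongr
    _ = (n : ℝ) ^ (Fintype.card ι * (1 / (2 * (Fintype.card ι + 1))) : ℝ) := by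
        rw [← Real.rpow_natCast_mul (by positivity)]
    _ ≤ (n : ℝ) ^ (1 / 2 : ℝ) := by
        refine Real.rpow_le_rpow_of_exponent_le hn1 ?_
        field_simp
        linarith
    _ = √(n : ℝ) := (Real.sqrt_eq_rpow _).symm
    _ ≤ 2 * n.totient := sqrt_le_two_mul_totient n

lemma summable_inv_totient_lcm_mul_prod :
    Summable fun M : ι → ℕ+ =>
      (((Finset.univ.lcm fun i => (M i : ℕ)).totient * ∏ i, (M i : ℕ) : ℕ) : ℝ)⁻¹ := by
  set q : ℝ := 1 / (2 * (Fintype.card ι + 1))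
  have hq0 : 0 < q := by positivity
  have hsum : Summable fun M : ι → ℕ+ => ∏ i, ((M i : ℕ) : ℝ) ^ (-(1 + q)) :=
    summable_pi_prod (f := fun _ (k : ℕ+) => ((k : ℕ) : ℝ) ^ (-(1 + q)))
      (fun _ _ => by positivity) fun _ =>
        (Real.summable_nat_rpow.2 (by linarith)).comp_injective PNat.coe_injective
  refine Summable.of_nonneg_of_le (fun _ => by positivity) (fun M => ?_) (hsum.mul_left 2)
  set n := Finset.univ.lcm fun i => (M i : ℕ)
  have hn : n ≠ 0 := by simp [n, Finset.lcm_eq_zero_iff]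
  have hMn (i : ι) : (M i : ℕ) ≤ n :=
    Nat.le_of_dvd (Nat.pos_of_ne_zero hn) (Finset.dvd_lcm (Finset.mem_univ i))
  set P : ℝ := ∏ i, ((M i : ℕ) : ℝ) with hP
  have hP0 : 0 < P := Finset.prod_pos fun i _ => mod_cast (M i).pos
  have hterm : ∏ i, ((M i : ℕ) : ℝ) ^ (-(1 + q)) = (P ^ q * P)⁻¹ := by
    rw [Real.finsetProd_rpow _ _ fun _ _ => by positivity, Real.rpow_neg hP0.le, add_comm,
      Real.rpow_add_one hP0.ne']
  have htotient : P ^ q ≤ 2 * n.totient := prod_rpow_le_two_mul_totient hn hMn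
  have : 0 < (n.totient : ℝ) := mod_cast Nat.totient_pos.2 (Nat.pos_of_ne_zero hn)
  push_cast
  rw [hterm, ← hP, ← div_eq_mul_inv, inv_eq_one_div,
    div_le_div_iff₀ (by positivity) (by positivity)]
  calc 1 * (P ^ q * P) ≤ 2 * n.totient * P := by rw [one_mul]; gcongr
    _ = 2 * (n.totient * P) := mul_assoc _ _ _

end Summability

section Saturation

open Height

variable {ι : Type*} [Fintype ι]

/-- `D` is a saturation exponent of a family `α` in an abelian group if the exponents of any `n`-th
power lying in the subgroup generated by `α` are divisible by `n` after multiplication by `D`. In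
particular, the `D`-th power of every element having a positive power in `⟨α⟩` is, up to torsion,
in `⟨α⟩`. -/
def IsSaturationExponent {G : Type*} [CommGroup G] (α : ι → G) (D : ℕ) : Prop :=
  ∀ ⦃n : ℕ⦄, n ≠ 0 → ∀ (γ : G) (a : ι → ℤ), γ ^ n = ∏ i, α i ^ a i → ∀ i, (n : ℤ) ∣ D * a i

lemma prod_zpow_injective {G : Type*} [CommGroup G] {α : ι → G}
    (hα : LinearIndependent ℤ fun i => Additive.ofMul (α i)) :
    Function.Injective fun a : ι → ℤ => ∏ i, α i ^ a i := by
  intro a b hab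
  have h := Fintype.linearIndependent_iff.1 hα (a - b) <| by
    simpa [sub_smul, sub_eq_zero] using congrArg Additive.ofMul hab
  exact funext fun i => sub_eq_zero.1 (h i)

variable {K : Type*} [Field K] [AdmissibleAbsValues K]

lemma logHeight₁_le_sum_of_pow_eq_prod_zpow {n : ℕ} (hn : n ≠ 0) {γ : K} {α : ι → K} {a : ι → ℤ}
    (ha : ∀ i, (a i).natAbs ≤ n) (h : γ ^ n = ∏ i, α i ^ a i) :
    logHeight₁ γ ≤ ∑ i, logHeight₁ (α i) := by
  have hmul : n * logHeight₁ γ ≤ n * ∑ i, logHeight₁ (α i) := calc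
    n * logHeight₁ γ = logHeight₁ (∏ i, α i ^ a i) := by rw [← h, logHeight₁_pow]
    _ ≤ ∑ i, (a i).natAbs * logHeight₁ (α i) := by
      simpa only [logHeight₁_zpow] using logHeight₁_prod_le Finset.univ fun i => α i ^ a i
    _ ≤ ∑ i, n * logHeight₁ (α i) := by
      gcongr with i
      exact ha i
    _ = n * ∑ i, logHeight₁ (α i) := (Finset.mul_sum _ _ _).symm
  exact le_of_mul_le_mul_left hmul (by positivity)

lemma exists_bound_pow_eq_prod_zpow [Northcott (logHeight₁ (K := K))] (α : ι → Kˣ) :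
    ∃ B : ℕ, ∀ (n : ℕ) (γ : Kˣ) (a : ι → ℤ), n ≠ 0 → γ ^ n = ∏ i, α i ^ a i →
      ∃ d, 0 < d ∧ d ≤ B ∧ ∃ b : ι → ℤ, γ ^ d = ∏ i, α i ^ b i := by
  have hfin : {u : Kˣ | logHeight₁ (u : K) ≤ ∑ i, logHeight₁ (α i : K)}.Finite :=
    (Northcott.finite_le (h := logHeight₁ (K := K)) _).preimage Units.val_injective.injOn
  refine ⟨hfin.toFinset.card, fun n γ a hn h => ?_⟩
  have hnZ : (n : ℤ) ≠ 0 := mod_cast hn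
  -- The elements `δ k` have bounded height, so two of them with `k ≤ B` coincide.
  let δ (k : ℕ) : Kˣ := γ ^ k * ∏ i, α i ^ (-(k * a i / n))
  have hδ_pow (k : ℕ) : δ k ^ n = ∏ i, α i ^ (k * a i % n) := by
    rw [mul_pow, pow_right_comm, h, ← Finset.prod_pow, ← Finset.prod_pow,
      ← Finset.prod_mul_distrib]
    refine Finset.prod_congr rfl fun i _ => ?_
    rw [← zpow_natCast, ← zpow_natCast, ← zpow_mul, ← zpow_mul, ← zpow_add, Int.emod_def]
    ring_nf
  have hδ_height (k : ℕ) : δ k ∈ hfin.toFinset := by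
    refine hfin.mem_toFinset.2 (logHeight₁_le_sum_of_pow_eq_prod_zpow hn
      (a := fun i => k * a i % n) (fun i => ?_) (mod_cast congrArg Units.val (hδ_pow k)))
    have := Int.emod_nonneg (k * a i) hnZ
    have := Int.emod_lt_of_pos (k * a i) (b := n) (by omega)
    omega
  obtain ⟨k, hk, l, hl, hkl, hδkl⟩ := Finset.exists_ne_map_eq_of_card_lt_of_maps_to
    (s := Finset.range (hfin.toFinset.card + 1)) (by simp) fun k _ => hδ_height k
  wlog hlt : k < l generalizing k l
  · exact this l hl k hk hkl.symm hδkl.symm (by omega)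
  rw [Finset.mem_range] at hl
  refine ⟨l - k, by omega, by omega, fun i => l * a i / n - k * a i / n, ?_⟩
  simp only [δ, zpow_neg, Finset.prod_inv_distrib, ← div_eq_mul_inv] at hδkl
  simp only [zpow_sub, Finset.prod_mul_distrib, Finset.prod_inv_distrib, pow_sub _ hlt.le]
  rw [← div_eq_mul_inv, ← div_eq_mul_inv, div_eq_div_iff_mul_eq_mul]
  rw [div_eq_div_iff_mul_eq_mul] at hδkl
  rw [← hδkl, mul_comm]

theorem exists_isSaturationExponent [Northcott (logHeight₁ (K := K))] {α : ι → Kˣ}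
    (hα : LinearIndependent ℤ fun i => Additive.ofMul (α i)) :
    ∃ D ≠ 0, IsSaturationExponent α D := by
  obtain ⟨B, hB⟩ := exists_bound_pow_eq_prod_zpow α
  refine ⟨B.factorial, B.factorial_ne_zero, fun n hn γ a h i => ?_⟩
  obtain ⟨d, hd0, hdB, b, hb⟩ := hB n γ a hn h
  have hab : (fun i => a i * d) = fun i => b i * n := prod_zpow_injective hα <| by
    simp only [zpow_mul, zpow_natCast, Finset.prod_pow, ← h, ← hb]
    exact pow_right_comm γ n d
  have hdvd : (n : ℤ) ∣ d * a i := ⟨b i, by linarith [congrFun hab i]⟩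
  exact hdvd.trans (mul_dvd_mul_right (mod_cast Nat.dvd_factorial hd0 hdB) _)

end Saturation

section KummerCharacter

variable {F E : Type*} [Field F] [Field E] [Algebra F E]

/-- The character `σ ↦ σ u / u` of `Gal(E/F)` attached to a unit `u` of `E` that every
automorphism multiplies by an element of `F`; it takes values in `F`, but is regarded as `E`-valued
so that Dedekind's independence of characters applies to it. -/
def kummerCharacter (u : Eˣ)
    (hu : ∀ σ : Gal(E/F), σ (u : E) / (u : E) ∈ Set.range (algebraMap F E)) : Gal(E/F) →* E where
  toFun σ := σ (u : E) / (u : E)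
  map_one' := div_self u.ne_zero
  map_mul' σ τ := by
    obtain ⟨c, hc⟩ := hu τ
    rw [← hc, AlgEquiv.mul_apply, ← div_mul_div_cancel₀ (b := σ (u : E)) (by simp), ← map_div₀,
      ← hc, AlgEquiv.commutes, mul_comm]

@[simp]
lemma kummerCharacter_apply {u : Eˣ}
    (hu : ∀ σ : Gal(E/F), σ (u : E) / (u : E) ∈ Set.range (algebraMap F E)) (σ : Gal(E/F)) :
    kummerCharacter u hu σ = σ (u : E) / (u : E) :=
  rfl

variable [IsGalois F E]

lemma kummerCharacter_eq_iff {u v : Eˣ}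
    (hu : ∀ σ : Gal(E/F), σ (u : E) / (u : E) ∈ Set.range (algebraMap F E))
    (hv : ∀ σ : Gal(E/F), σ (v : E) / (v : E) ∈ Set.range (algebraMap F E)) :
    kummerCharacter u hu = kummerCharacter v hv ↔ (u / v : E) ∈ Set.range (algebraMap F E) := by
  rw [InfiniteGalois.mem_range_algebraMap_iff_fixed, DFunLike.ext_iff]
  refine forall_congr' fun σ => ?_
  rw [kummerCharacter_apply, kummerCharacter_apply, map_div₀,
    div_eq_div_iff u.ne_zero v.ne_zero, div_eq_div_iff (by simp) v.ne_zero, mul_comm (u : E)]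

theorem linearIndependent_of_apply_div_mem_range {ι : Type*} {x : ι → Eˣ}
    (hx : ∀ i (σ : Gal(E/F)), σ (x i : E) / (x i : E) ∈ Set.range (algebraMap F E))
    (hdiv : ∀ i j, (x i / x j : E) ∈ Set.range (algebraMap F E) → i = j) :
    LinearIndependent F fun i => (x i : E) := by
  have hχ : Function.Injective fun i => kummerCharacter (x i) (hx i) := fun i j hij =>
    hdiv i j ((kummerCharacter_eq_iff (hx i) (hx j)).1 hij)
  have hdedekind := (linearIndependent_monoidHom Gal(E/F) E).comp _ hχ
  rw [linearIndependent_iff'] at hdedekind ⊢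
  intro s c hc i hi
  have hcoeff := hdedekind s (fun i => algebraMap F E (c i) * x i) ?_ i hi
  · simpa using hcoeff
  funext σ
  have hσ (j : ι) : algebraMap F E (c j) * x j * (σ (x j : E) / x j) = c j • σ (x j : E) := by
    rw [Algebra.smul_def, mul_assoc, mul_div_cancel₀ _ (x j).ne_zero]
  simpa [hσ] using congrArg σ hc

end KummerCharacter

section Kummer

lemma prod_zpow_pow_eq_map {ι G H : Type*} [Fintype ι] [CommGroup G] [CommGroup H] {φ : G →* H}
    {α : ι → G} {ρ : ι → H} {m q : ι → ℕ} {n : ℕ} (hρ : ∀ i, ρ i ^ m i = φ (α i))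
    (hq : ∀ i, n = m i * q i) (e : ι → ℤ) :
    (∏ i, ρ i ^ e i) ^ n = φ (∏ i, α i ^ (q i * e i)) := by
  rw [← Finset.prod_pow, map_prod]
  refine Finset.prod_congr rfl fun i _ => ?_
  rw [map_zpow, ← hρ, zpow_mul, zpow_natCast, ← pow_mul, ← hq, ← zpow_natCast, ← zpow_natCast,
    zpow_comm]

open IntermediateField

variable {K E : Type*} [Field K] [Field E] [Algebra K E] {n : ℕ}

variable (K E n) in
/-- The subgroup `Kˣ · μₙ(E)` of `Eˣ`. Its elements are the obvious solutions of `β ^ n ∈ K`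
in `K(ζₙ)`. -/
def unitsMulRootsOfUnity : Subgroup Eˣ :=
  (Units.map (algebraMap K E : K →* E)).range ⊔ rootsOfUnity n E

lemma exists_pow_eq_map_pow_of_mem_unitsMulRootsOfUnity {β : Eˣ}
    (hβ : β ∈ unitsMulRootsOfUnity K E n) :
    ∃ κ : Kˣ, β ^ n = Units.map (algebraMap K E : K →* E) (κ ^ n) := by
  obtain ⟨_, ⟨κ, rfl⟩, ξ, hξ, rfl⟩ := Subgroup.mem_sup.1 hβ
  exact ⟨κ, by rw [mul_pow, (mem_rootsOfUnity n ξ).1 hξ, mul_one, map_pow]⟩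

lemma mem_range_unitsMap_iff {u : Eˣ} :
    u ∈ (Units.map (algebraMap K E : K →* E)).range ↔ (u : E) ∈ Set.range (algebraMap K E) := by
  refine ⟨fun ⟨c, hc⟩ => ⟨c, congrArg Units.val hc⟩, fun ⟨c, hc⟩ => ?_⟩
  have hc0 : c ≠ 0 := by
    rintro rfl
    exact u.ne_zero (by rw [← hc, map_zero])
  exact ⟨Units.mk0 c hc0, Units.ext hc⟩

variable [NeZero n] {ζ : E}

lemma exists_algEquiv_apply_eq_pow_mul (hζ : IsPrimitiveRoot ζ n) {β : Eˣ}
    (hβ : (β : E) ^ n ∈ Set.range (algebraMap K E)) (σ : Gal(E/K)) :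
    ∃ j : ℕ, σ β = ζ ^ j * β := by
  obtain ⟨b, hb⟩ := hβ
  have hroot : (σ β / β) ^ n = 1 := by
    rw [div_pow, ← map_pow, ← hb, AlgEquiv.commutes, hb, div_self (pow_ne_zero n β.ne_zero)]
  obtain ⟨j, -, hj⟩ := hζ.eq_pow_of_pow_eq_one hroot
  exact ⟨j, by rw [hj, div_mul_cancel₀ _ β.ne_zero]⟩

lemma algEquiv_apply_comm_of_mem_adjoin (hζ : IsPrimitiveRoot ζ n) {β : E} (hβ : β ∈ K⟮ζ⟯)
    (σ τ : Gal(E/K)) : σ (τ β) = τ (σ β) := by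
  induction hβ using adjoin_induction with
  | mem x hx =>
    obtain rfl := Set.mem_singleton_iff.1 hx
    simp only [← hζ.autToPow_spec K σ, ← hζ.autToPow_spec K τ, map_pow]
    exact pow_right_comm ..
  | algebraMap c => simp only [AlgEquiv.commutes]
  | add x y _ _ hx hy => simp only [map_add, hx, hy]
  | inv x _ hx => simp only [map_inv₀, hx]
  | mul x y _ _ hx hy => simp only [map_mul, hx, hy]

variable [IsGalois K E]

lemma apply_div_pow_mem_range_of_mem_adjoin (hζ : IsPrimitiveRoot ζ n) {β : Eˣ}
    (hβ : (β : E) ∈ K⟮ζ⟯) (hβn : (β : E) ^ n ∈ Set.range (algebraMap K E)) {τ : Gal(E/K)} {k : ℕ}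
    (hτ : τ ζ = ζ ^ k) : τ β / (β : E) ^ k ∈ Set.range (algebraMap K E) := by
  refine (InfiniteGalois.mem_range_algebraMap_iff_fixed _).2 fun σ => ?_
  obtain ⟨j, hj⟩ := exists_algEquiv_apply_eq_pow_mul hζ hβn σ
  have hζ0 : ζ ≠ 0 := hζ.ne_zero (NeZero.ne n)
  rw [map_div₀, algEquiv_apply_comm_of_mem_adjoin hζ hβ, map_pow, hj, map_mul, map_pow, hτ,
    mul_pow, pow_right_comm, mul_div_mul_left _ _ (pow_ne_zero _ (pow_ne_zero _ hζ0))]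

lemma zpow_sub_one_mem_unitsMulRootsOfUnity (hζ : IsPrimitiveRoot ζ n) {β : Eˣ}
    (hβ : (β : E) ∈ K⟮ζ⟯) (hβn : (β : E) ^ n ∈ Set.range (algebraMap K E)) {τ : Gal(E/K)} {k : ℕ}
    (hτ : τ ζ = ζ ^ k) : β ^ ((k : ℤ) - 1) ∈ unitsMulRootsOfUnity K E n := by
  obtain ⟨j, hj⟩ := exists_algEquiv_apply_eq_pow_mul hζ hβn τ
  let η : Eˣ := (hζ.isUnit (NeZero.ne n)).unit
  have hη : η ^ j ∈ rootsOfUnity n E := pow_mem ((mem_rootsOfUnity' n η).2 hζ.pow_eq_one) j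
  have hquot : η ^ j * β / β ^ k ∈ (Units.map (algebraMap K E : K →* E)).range := by
    refine mem_range_unitsMap_iff.2 ?_
    simpa [η, hj] using apply_div_pow_mem_range_of_mem_adjoin hζ hβ hβn hτ
  have hβk : β ^ ((k : ℤ) - 1) = (η ^ j * β / β ^ k)⁻¹ * η ^ j := by
    rw [zpow_sub_one, zpow_natCast, inv_div, mul_comm (η ^ j), div_mul_eq_mul_div,
      mul_div_mul_right_eq_div, div_eq_mul_inv]
  rw [hβk]
  exact mul_mem (Subgroup.mem_sup_left (inv_mem hquot)) (Subgroup.mem_sup_right hη)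

/-- Schinzel's theorem on abelian binomials: the order `g` of `β` modulo `Kˣ · μₙ(E)` divides `n`
and every `k - 1` for which `ζ ↦ ζ ^ k` extends to an automorphism, so `ζ ^ (n / g)` is a primitive
`g`-th root of unity in `K`. -/
theorem pow_mem_unitsMulRootsOfUnity_of_mem_adjoin (hζ : IsPrimitiveRoot ζ n) {w : ℕ}
    (hw : ∀ g, g ∣ n → ∀ z : K, IsPrimitiveRoot z g → g ∣ w) {β : Eˣ}
    (hβ : (β : E) ∈ K⟮ζ⟯) (hβn : (β : E) ^ n ∈ Set.range (algebraMap K E)) :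
    β ^ w ∈ unitsMulRootsOfUnity K E n := by
  let g := orderOf (β : Eˣ ⧸ unitsMulRootsOfUnity K E n)
  have hg_dvd {e : ℤ} : (g : ℤ) ∣ e ↔ β ^ e ∈ unitsMulRootsOfUnity K E n := by
    rw [orderOf_dvd_iff_zpow_eq_one, ← QuotientGroup.mk_zpow, QuotientGroup.eq_one_iff]
  have hgn : g ∣ n := Int.natCast_dvd_natCast.1 <| hg_dvd.2 <| by
    rw [zpow_natCast]
    exact Subgroup.mem_sup_left (mem_range_unitsMap_iff.2 hβn)
  obtain ⟨q, hq⟩ := hgn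
  have hprim : IsPrimitiveRoot (ζ ^ q) g := hζ.pow (NeZero.pos n) (hq.trans (mul_comm g q))
  have hfixed (τ : Gal(E/K)) : τ (ζ ^ q) = ζ ^ q := by
    have hτ := (hζ.autToPow_spec K τ).symm
    obtain ⟨c, hc⟩ := hg_dvd.2 (zpow_sub_one_mem_unitsMulRootsOfUnity hζ hβ hβn hτ)
    rw [map_pow, hτ, pow_right_comm, ← zpow_natCast, eq_add_of_sub_eq hc,
      zpow_add_one₀ (hprim.ne_zero (by rintro h; simp [h, NeZero.ne n] at hq)), zpow_mul,
      zpow_natCast, hprim.pow_eq_one, one_zpow, one_mul]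
  obtain ⟨z, hz⟩ := (InfiniteGalois.mem_range_algebraMap_iff_fixed _).2 hfixed
  have hgw : g ∣ w := hw g ⟨q, hq⟩ z <|
    (hz ▸ hprim).of_map_of_injective (f := algebraMap K E) (algebraMap K E).injective
  simpa using hg_dvd.1 (Int.natCast_dvd_natCast.2 hgw)

theorem dvd_mul_of_prod_zpow_mem_adjoin {ι : Type*} [Fintype ι] (hζ : IsPrimitiveRoot ζ n) {w : ℕ}
    (hw : ∀ g, g ∣ n → ∀ z : K, IsPrimitiveRoot z g → g ∣ w) {α : ι → Kˣ} {D : ℕ}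
    (hD : IsSaturationExponent α D) {m : ι → ℕ} (hm : ∀ i, m i ∣ n) {ρ : ι → Eˣ}
    (hρ : ∀ i, ρ i ^ m i = Units.map (algebraMap K E : K →* E) (α i)) {e : ι → ℤ}
    (he : ((∏ i, ρ i ^ e i : Eˣ) : E) ∈ K⟮ζ⟯) (i : ι) : (m i : ℤ) ∣ (D * w : ℕ) * e i := by
  choose q hq using hm
  have hpow := prod_zpow_pow_eq_map hρ hq e
  have hrange : ((∏ i, ρ i ^ e i : Eˣ) : E) ^ n ∈ Set.range (algebraMap K E) :=
    mem_range_unitsMap_iff.1 ⟨_, hpow.symm⟩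
  obtain ⟨κ, hκ⟩ := exists_pow_eq_map_pow_of_mem_unitsMulRootsOfUnity
    (pow_mem_unitsMulRootsOfUnity_of_mem_adjoin hζ hw he hrange)
  have hκn : κ ^ n = ∏ i, α i ^ (q i * e i * w) := by
    refine Units.map_injective (f := (algebraMap K E : K →* E)) (algebraMap K E).injective ?_
    rw [← hκ, pow_right_comm, hpow, ← map_pow, ← Finset.prod_pow]
    simp only [zpow_mul, zpow_natCast]
  have hdvd := hD (NeZero.ne n) κ _ hκn i
  have hqi : (q i : ℤ) ≠ 0 := by
    intro h
    exact NeZero.ne n (by rw [hq i, Nat.cast_eq_zero.1 h, mul_zero])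
  refine (mul_dvd_mul_iff_right hqi).1 ?_
  convert! hdvd using 1
  · exact_mod_cast (hq i).symm
  · push_cast
    ring

end Kummer

section Degree

open IntermediateField

lemma eq_of_natCast_dvd_mul_sub {m P a b : ℕ} (ha : a < m ⌈/⌉ P) (hb : b < m ⌈/⌉ P) (hP : 0 < P)
    (h : (m : ℤ) ∣ P * (a - b)) : a = b := by
  have ha' : P * a < m := not_le.1 fun hle => ha.not_ge ((ceilDiv_le_iff_le_mul hP).2 hle)
  have hb' : P * b < m := not_le.1 fun hle => hb.not_ge ((ceilDiv_le_iff_le_mul hP).2 hle)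
  have hzero : (P : ℤ) * (a - b) = 0 := by
    refine Int.eq_zero_of_abs_lt_dvd h (abs_lt.2 ?_)
    zify at ha' hb'
    have := mul_nonneg (Nat.cast_nonneg P) (Nat.cast_nonneg (α := ℤ) a)
    have := mul_nonneg (Nat.cast_nonneg P) (Nat.cast_nonneg (α := ℤ) b)
    constructor <;> linarith
  have := (mul_eq_zero.1 hzero).resolve_left (by omega)
  omega

section Monomials

variable {K E ι : Type*} [Field K] [Field E] [Algebra K E] [IsGalois K E] [Fintype ι]
  {n : ℕ} [NeZero n] {ζ : E} {w D : ℕ} {α : ι → Kˣ} {m : ι → ℕ} {ρ : ι → Eˣ}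

theorem linearIndependent_prod_pow_of_lt_ceilDiv (hζ : IsPrimitiveRoot ζ n)
    (hw : ∀ g, g ∣ n → ∀ z : K, IsPrimitiveRoot z g → g ∣ w) (hD : IsSaturationExponent α D)
    (hDw : 0 < D * w) (hm : ∀ i, m i ∣ n)
    (hρ : ∀ i, ρ i ^ m i = Units.map (algebraMap K E : K →* E) (α i)) :
    LinearIndependent K⟮ζ⟯ fun e : ∀ i, Fin (m i ⌈/⌉ (D * w)) =>
      ((∏ i, ρ i ^ (e i : ℕ) : Eˣ) : E) := by
  refine linearIndependent_of_apply_div_mem_range (fun e σ => ?_) fun e e' hee' => ?_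
  · choose q hq using hm
    have hpow := congrArg Units.val (prod_zpow_pow_eq_map hρ hq fun i => (e i : ℤ))
    simp only [zpow_natCast] at hpow
    have hmon : ((∏ i, ρ i ^ (e i : ℕ) : Eˣ) : E) ^ n ∈ Set.range (algebraMap K⟮ζ⟯ E) :=
      ⟨algebraMap K K⟮ζ⟯ _, hpow.symm⟩
    obtain ⟨j, hj⟩ := exists_algEquiv_apply_eq_pow_mul hζ hmon σ
    rw [hj, mul_div_cancel_right₀ _ (Units.ne_zero _)]
    exact ⟨AdjoinSimple.gen K ζ ^ j, by simp⟩
  · have hmem : ((∏ i, ρ i ^ ((e i : ℤ) - (e' i : ℤ)) : Eˣ) : E) ∈ K⟮ζ⟯ := by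
      obtain ⟨c, hc⟩ := hee'
      simp only [zpow_sub, zpow_natCast, Finset.prod_mul_distrib, Finset.prod_inv_distrib]
      rw [← div_eq_mul_inv, Units.val_div_eq_div_val, ← hc]
      exact c.2
    funext i
    exact Fin.ext <| eq_of_natCast_dvd_mul_sub (e i).2 (e' i).2 hDw <|
      dvd_mul_of_prod_zpow_mem_adjoin hζ hw hD hm hρ hmem i

theorem prod_ceilDiv_le_finrank_adjoin [FiniteDimensional K E] (hζ : IsPrimitiveRoot ζ n)
    (hw : ∀ g, g ∣ n → ∀ z : K, IsPrimitiveRoot z g → g ∣ w) (hD : IsSaturationExponent α D)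
    (hDw : 0 < D * w) (hm : ∀ i, m i ∣ n)
    (hρ : ∀ i, ρ i ^ m i = Units.map (algebraMap K E : K →* E) (α i)) :
    ∏ i, m i ⌈/⌉ (D * w) ≤ Module.finrank K⟮ζ⟯ E := by
  classical
  simpa using
    (linearIndependent_prod_pow_of_lt_ceilDiv hζ hw hD hDw hm hρ).fintype_card_le_finrank

end Monomials

section NumberField

open NumberField.Units (torsionOrder)

variable {K E ι : Type*} [Field K] [NumberField K] [Field E] [Algebra K E]
  {n : ℕ} [NeZero n] {ζ : E}

lemma totient_le_finrank_mul_finrank_adjoin (hζ : IsPrimitiveRoot ζ n) :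
    n.totient ≤ Module.finrank ℚ K * Module.finrank K K⟮ζ⟯ := by
  have := charZero_of_injective_algebraMap (algebraMap K E).injective
  have hgen : IsPrimitiveRoot (AdjoinSimple.gen K ζ) n :=
    hζ.of_map_of_injective (f := algebraMap K⟮ζ⟯ E) (algebraMap K⟮ζ⟯ E).injective
  have := adjoin.finiteDimensional ((hζ.isIntegral (NeZero.pos n)).tower_top (A := K))
  have := Module.Finite.trans (R := ℚ) K K⟮ζ⟯
  rw [Module.finrank_mul_finrank]
  simpa using hgen.lcm_totient_le_finrank hgen (Polynomial.cyclotomic.irreducible_rat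
    (by simpa using NeZero.pos n))

theorem totient_mul_prod_le_mul_finrank [FiniteDimensional K E] [IsGalois K E] [Fintype ι]
    {α : ι → Kˣ} {D : ℕ} (hD0 : D ≠ 0) (hD : IsSaturationExponent α D) (hζ : IsPrimitiveRoot ζ n)
    {m : ι → ℕ} (hm : ∀ i, m i ∣ n) {ρ : ι → Eˣ}
    (hρ : ∀ i, ρ i ^ m i = Units.map (algebraMap K E : K →* E) (α i)) :
    n.totient * ∏ i, m i ≤
      Module.finrank ℚ K * (D * torsionOrder K) ^ Fintype.card ι * Module.finrank K E := by
  set P := D * torsionOrder K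
  have hP : 0 < P := Nat.mul_pos (Nat.pos_of_ne_zero hD0) (NumberField.Units.torsionOrder_pos K)
  have htorsion (g : ℕ) (hg : g ∣ n) (z : K) (hz : IsPrimitiveRoot z g) : g ∣ torsionOrder K :=
    have : NeZero g := ⟨ne_zero_of_dvd_ne_zero (NeZero.ne n) hg⟩
    NumberField.Units.dvd_torsionOrder_of_isPrimitiveRoot hz
  have hprod : ∏ i, m i ≤ P ^ Fintype.card ι * Module.finrank K⟮ζ⟯ E := calc
    ∏ i, m i ≤ ∏ i, P * (m i ⌈/⌉ P) := Finset.prod_le_prod' fun i _ => le_smul_ceilDiv hP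
    _ = P ^ Fintype.card ι * ∏ i, m i ⌈/⌉ P := by simp [Finset.prod_mul_distrib]
    _ ≤ P ^ Fintype.card ι * Module.finrank K⟮ζ⟯ E := by
      gcongr
      exact prod_ceilDiv_le_finrank_adjoin hζ htorsion hD hP hm hρ
  calc n.totient * ∏ i, m i
      ≤ Module.finrank ℚ K * Module.finrank K K⟮ζ⟯ *
          (P ^ Fintype.card ι * Module.finrank K⟮ζ⟯ E) :=
        Nat.mul_le_mul (totient_le_finrank_mul_finrank_adjoin hζ) hprod
    _ = Module.finrank ℚ K * P ^ Fintype.card ι * Module.finrank K E := by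
        rw [← Module.finrank_mul_finrank K K⟮ζ⟯ E]
        ring

end NumberField

end Degree

section KummerField

open IntermediateField Polynomial

lemma isSplittingField_adjoin_setOf_pow_eq (K : Type*) {E : Type*} [Field K] [Field E] [Algebra K E]
    [IsAlgClosed E] {k : ℕ} (hk : k ≠ 0) (a : K) :
    (X ^ k - C a : K[X]).IsSplittingField K (adjoin K {z : E | z ^ k = algebraMap K E a}) := by
  have hroots : (X ^ k - C a : K[X]).rootSet E = {z : E | z ^ k = algebraMap K E a} := by
    ext z
    simp [mem_rootSet_of_ne (X_pow_sub_C_ne_zero (Nat.pos_of_ne_zero hk) a), sub_eq_zero]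
  rw [← hroots]
  exact adjoin_rootSet_isSplittingField (IsAlgClosed.splits _)

lemma adjoin_setOf_pow_eq_one (K : Type*) {E : Type*} [Field K] [Field E] [Algebra K E] {n : ℕ}
    [NeZero n] {ζ : E} (hζ : IsPrimitiveRoot ζ n) : adjoin K {z : E | z ^ n = 1} = K⟮ζ⟯ := by
  refine le_antisymm (adjoin_le_iff.2 fun z hz => ?_) (adjoin_simple_le_iff.2 ?_)
  · obtain ⟨j, -, rfl⟩ := hζ.eq_pow_of_pow_eq_one hz
    exact pow_mem (mem_adjoin_simple_self K ζ) j
  · exact subset_adjoin K _ hζ.pow_eq_one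

lemma isPrimitiveRoot_primRoot {n : ℕ} (hn : n ≠ 0) : IsPrimitiveRoot (primRoot n) n :=
  Complex.isPrimitiveRoot_exp n hn

variable {K : IntermediateField ℚ ℂ} {r : ℕ} {a : Fin r → K} {n : ℕ} {t : Fin r → ℕ}

lemma extendScalars_kummerField_eq_sup (hn : n ≠ 0) :
    extendScalars (base_le_kummer K (fun i => a i) n t) =
      adjoin K {z : ℂ | z ^ n = algebraMap K ℂ 1} ⊔
        ⨆ i, adjoin K {z : ℂ | z ^ t i = algebraMap K ℂ (a i)} := by
  have : NeZero n := ⟨hn⟩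
  rw [map_one, adjoin_setOf_pow_eq_one K (isPrimitiveRoot_primRoot hn), ← adjoin_iUnion,
    ← adjoin_union]
  exact restrictScalars_injective ℚ <|
    (extendScalars_restrictScalars _).trans (restrictScalars_adjoin_eq_sup ℚ K _).symm

lemma finiteDimensional_extendScalars_kummerField (hn : n ≠ 0) (ht : ∀ i, t i ≠ 0) :
    FiniteDimensional K (extendScalars (base_le_kummer K (fun i => a i) n t)) := by
  have hone := (isSplittingField_adjoin_setOf_pow_eq K (E := ℂ) hn 1).finiteDimensional
  have hroot (i : Fin r) :=
    (isSplittingField_adjoin_setOf_pow_eq K (E := ℂ) (ht i) (a i)).finiteDimensional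
  rw [extendScalars_kummerField_eq_sup hn]
  infer_instance

lemma isGalois_extendScalars_kummerField (hn : n ≠ 0) (ht : ∀ i, t i ≠ 0) :
    IsGalois K (extendScalars (base_le_kummer K (fun i => a i) n t)) := by
  have hone := Normal.of_isSplittingField (X ^ n - C 1 : K[X])
    (hFEp := isSplittingField_adjoin_setOf_pow_eq K (E := ℂ) hn 1)
  have hroot (i : Fin r) := Normal.of_isSplittingField (X ^ t i - C (a i))
    (hFEp := isSplittingField_adjoin_setOf_pow_eq K (E := ℂ) (ht i) (a i))
  have hfin := finiteDimensional_extendScalars_kummerField (K := K) (a := a) hn ht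
  refine isGalois_iff.2 ⟨inferInstance, ?_⟩
  rw [extendScalars_kummerField_eq_sup hn]
  infer_instance

lemma totient_mul_prod_le_mul_finrank_kummerField [NumberField K] {u : Fin r → Kˣ} {D : ℕ}
    (hD0 : D ≠ 0) (hD : IsSaturationExponent u D) (hn : n ≠ 0) (ht : ∀ i, t i ∣ n) :
    n.totient * ∏ i, t i ≤ Module.finrank ℚ K * (D * NumberField.Units.torsionOrder K) ^ r *
      Module.finrank K (extendScalars (base_le_kummer K (fun i => (u i : K)) n t)) := by
  set L := extendScalars (base_le_kummer K (fun i => (u i : K)) n t)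
  have ht0 (i : Fin r) : t i ≠ 0 := ne_zero_of_dvd_ne_zero hn (ht i)
  have : NeZero n := ⟨hn⟩
  have : FiniteDimensional K L := finiteDimensional_extendScalars_kummerField hn ht0
  have : IsGalois K L := isGalois_extendScalars_kummerField hn ht0
  have hgen : {primRoot n} ∪ ⋃ i, {z : ℂ | z ^ t i = (u i : K)} ⊆ (L : Set ℂ) := fun z hz =>
    (le_sup_right : _ ≤ kummerField K (fun i => (u i : K)) n t) (subset_adjoin ℚ _ hz)
  have hζ : IsPrimitiveRoot (⟨primRoot n, hgen (.inl rfl)⟩ : L) n :=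
    (isPrimitiveRoot_primRoot hn).of_map_of_injective (f := algebraMap L ℂ)
      (algebraMap L ℂ).injective
  choose z hz using fun i => IsAlgClosed.exists_pow_nat_eq ((u i : K) : ℂ)
    (Nat.pos_of_ne_zero (ht0 i))
  let ρ (i : Fin r) : L := ⟨z i, hgen (.inr (Set.mem_iUnion.2 ⟨i, hz i⟩))⟩
  have hρ (i : Fin r) : ρ i ^ t i = algebraMap K L (u i) := Subtype.ext (hz i)
  have hρ0 (i : Fin r) : ρ i ≠ 0 := fun h =>
    (u i).ne_zero ((algebraMap K L).injective (by rw [← hρ, h, zero_pow (ht0 i), map_zero]))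
  simpa using totient_mul_prod_le_mul_finrank hD0 hD hζ ht
    (ρ := fun i => Units.mk0 (ρ i) (hρ0 i)) fun i => Units.ext (hρ i)

theorem summable_inv_finrank_kummerField [NumberField K] {u : Fin r → Kˣ}
    (hu : LinearIndependent ℤ fun i => Additive.ofMul (u i)) :
    Summable fun M : Fin r → ℕ+ => (Module.finrank K (extendScalars (base_le_kummer K
      (fun i => (u i : K)) (Finset.univ.lcm fun i => (M i : ℕ)) fun i => M i)) : ℝ)⁻¹ := by
  obtain ⟨D, hD0, hD⟩ := exists_isSaturationExponent hu
  set C := Module.finrank ℚ K * (D * NumberField.Units.torsionOrder K) ^ r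
  refine Summable.of_nonneg_of_le (fun _ => by positivity) (fun M => ?_)
    (summable_inv_totient_lcm_mul_prod.mul_left (C : ℝ))
  set n := Finset.univ.lcm fun i => (M i : ℕ)
  have hn : n ≠ 0 := by simp [n, Finset.lcm_eq_zero_iff]
  have hbound := totient_mul_prod_le_mul_finrank_kummerField hD0 hD hn (t := fun i => M i)
    fun i => Finset.dvd_lcm (Finset.mem_univ i)
  have hpos : 0 < n.totient * ∏ i, (M i : ℕ) :=
    Nat.mul_pos (Nat.totient_pos.2 (Nat.pos_of_ne_zero hn)) (Finset.prod_pos fun i _ => (M i).pos)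
  have hdeg := Nat.pos_of_mul_pos_left (hpos.trans_le hbound)
  rw [← div_eq_mul_inv, inv_eq_one_div, div_le_div_iff₀ (mod_cast hdeg) (mod_cast hpos), one_mul]
  exact_mod_cast hbound

end KummerField

/-- Let `K ⊆ ℂ` be a number field and `α_1,…,α_r ∈ K^×` multiplicatively
independent. Fix an `r`-tuple `T` of positive integers. Then the family
`1/[K_{N,T} : K]`, indexed by all `r`-tuples `N` of positive integers, is summable. -/
theorem summable_inv_degree_KNT {r : ℕ} (K : IntermediateField ℚ ℂ)
    [FiniteDimensional ℚ K] (α : Fin r → ℂ)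
    (hmem : ∀ i, α i ∈ K) (hα0 : ∀ i, α i ≠ 0)
    (hind : ∀ e : Fin r → ℤ, ∏ i, α i ^ e i = 1 → e = 0)
    (T : Fin r → ℕ+) :
    Summable (fun N : Fin r → ℕ+ =>
      (1 : ℝ) / (Module.finrank K (IntermediateField.extendScalars
        (base_le_kummer K α (Finset.univ.lcm fun i => (N i : ℕ) * (T i : ℕ))
          (fun i => (N i : ℕ) * (T i : ℕ)))) : ℝ)) := by
  have : NumberField K := { to_charZero := inferInstance, to_finiteDimensional := inferInstance }
  lift α to Fin r → K using hmem
  have hα0' (i : Fin r) : α i ≠ 0 := fun h => hα0 i (by simp [h])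
  let u (i : Fin r) : Kˣ := Units.mk0 (α i) (hα0' i)
  have hu : LinearIndependent ℤ fun i => Additive.ofMul (u i) := by
    refine Fintype.linearIndependent_iff.2 fun e he => congrFun (hind e ?_)
    have hprod : ∏ i, u i ^ e i = 1 := by simpa using congrArg Additive.toMul he
    simpa [u] using congrArg (fun v : Kˣ => algebraMap K ℂ v) hprod
  simpa using! (summable_inv_finrank_kummerField hu).comp_injective (mul_left_injective T)
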